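/- (Corollary 2.6, relaxation part.) Let (A, b) be an explicit s-stage Runge–Kutta method of order p ≥ 2 (in the sense that for every C^∞ right-hand side the one-step local error is O(Δt^{p+1})). Let f be C^∞ with f(t₀, u₀) ≠ 0 and exact solution u defined on a neighborhood of t₀. With γ(Δt) the relaxation parameter defined by the case formula, the relaxed update u¹_γ(Δt) = u₀ + γ(Δt) Δt Σⱼ bⱼ fⱼ, interpreted as an approximation to u(t₀ + γ(Δt)Δt), has order p: ‖u¹_γ(Δt) − u(t₀ + γ(Δt)Δt)‖ = O(Δt^{p+1}) as Δt → 0⁺. -/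

import Mathlib

open scoped RealInnerProductSpace
open Classical

/-- An explicit Runge–Kutta method `(A, b)` has order `p` if for every `C^∞` right-hand
side, every initial condition, and every local solution of the IVP, the one-step local
error is `O(dt^(p+1))`.  Here `F dt i` denotes the stage derivatives
`F dt i = f(t₀ + cᵢ dt, u₀ + dt ∑ⱼ aᵢⱼ F dt j)` with `cᵢ = ∑ⱼ aᵢⱼ`, and the update is
`u¹(dt) = u₀ + dt ∑ⱼ bⱼ F dt j`. -/
def RKHasOrder {s : ℕ} (A : Fin s → Fin s → ℝ) (b : Fin s → ℝ) (p : ℕ) : Prop :=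
  ∀ (m : ℕ) (f : ℝ → EuclideanSpace ℝ (Fin m) → EuclideanSpace ℝ (Fin m)),
    ContDiff ℝ (⊤ : ℕ∞) (Function.uncurry f) →
    ∀ (t₀ : ℝ) (u₀ : EuclideanSpace ℝ (Fin m)) (F : ℝ → Fin s → EuclideanSpace ℝ (Fin m)),
      (∀ dt i, F dt i =
        f (t₀ + (∑ j, A i j) * dt) (u₀ + dt • ∑ j, A i j • F dt j)) →
      ∀ (u : ℝ → EuclideanSpace ℝ (Fin m)) (ε : ℝ), 0 < ε →
        (∀ t ∈ Set.Ioo (t₀ - ε) (t₀ + ε), HasDerivAt u (f t (u t)) t) →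
        u t₀ = u₀ →
        ∃ C δ : ℝ, 0 < C ∧ 0 < δ ∧
          ∀ dt ∈ Set.Ioo (0 : ℝ) δ,
            ‖u₀ + dt • ∑ j, b j • F dt j - u (t₀ + dt)‖ ≤ C * dt ^ (p + 1)

/-- The relaxation parameter of one explicit Runge–Kutta step, as a function of the
step size, given the stage derivatives `F`. -/
noncomputable def RKGamma {s m : ℕ} (A : Fin s → Fin s → ℝ) (b : Fin s → ℝ)
    (F : ℝ → Fin s → EuclideanSpace ℝ (Fin m)) (dt : ℝ) : ℝ :=
  if (∑ j, b j • F dt j) = 0 then 1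
  else (2 * ∑ i, ∑ j, b i * A i j * ⟪F dt i, F dt j⟫) / ‖∑ j, b j • F dt j‖ ^ 2

lemma rrk_aug {s m p : ℕ} (A : Fin s → Fin s → ℝ) (b : Fin s → ℝ)
    (horder : RKHasOrder A b p)
    (f : ℝ → EuclideanSpace ℝ (Fin m) → EuclideanSpace ℝ (Fin m))
    (hf : ContDiff ℝ (⊤ : ℕ∞) (Function.uncurry f))
    (t₀ : ℝ) (u₀ : EuclideanSpace ℝ (Fin m))
    (F : ℝ → Fin s → EuclideanSpace ℝ (Fin m))
    (hF : ∀ dt i, F dt i =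
      f (t₀ + (∑ j, A i j) * dt) (u₀ + dt • ∑ j, A i j • F dt j))
    (u : ℝ → EuclideanSpace ℝ (Fin m)) (ε : ℝ) (hε : 0 < ε)
    (hu : ∀ t ∈ Set.Ioo (t₀ - ε) (t₀ + ε), HasDerivAt u (f t (u t)) t)
    (hu₀ : u t₀ = u₀) :
    ∃ C δ : ℝ, 0 < C ∧ 0 < δ ∧ ∀ dt ∈ Set.Ioo (0 : ℝ) δ,
      ‖u₀ + dt • ∑ j, b j • F dt j - u (t₀ + dt)‖ ≤ C * dt ^ (p + 1) ∧
      |dt ^ 2 * (2 * ∑ i, ∑ j, b i * A i j * ⟪F dt i, F dt j⟫) - ‖u (t₀ + dt) - u₀‖ ^ 2|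
        ≤ C * dt ^ (p + 1) := by
  let e : EuclideanSpace ℝ (Fin (m + 1)) ≃L[ℝ] (EuclideanSpace ℝ (Fin m) × ℝ) :=
    ContinuousLinearEquiv.ofFinrankEq (by simp)
  obtain ⟨C, δ, hC, hδ, H⟩ := horder (m + 1)
    (fun t x => e.symm (f t (e x).1, 2 * ⟪(e x).1 - u₀, f t (e x).1⟫))
    (by
      have h1 : ContDiff ℝ (⊤ : ℕ∞)
          (fun q : ℝ × EuclideanSpace ℝ (Fin (m + 1)) => (e q.2).1) :=
        contDiff_fst.comp (e.contDiff.comp contDiff_snd)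
      have h2 : ContDiff ℝ (⊤ : ℕ∞)
          (fun q : ℝ × EuclideanSpace ℝ (Fin (m + 1)) => f q.1 (e q.2).1) :=
        hf.comp (contDiff_fst.prodMk h1)
      exact e.symm.contDiff.comp
        (h2.prodMk (contDiff_const.mul ((h1.sub contDiff_const).inner ℝ h2))))
    t₀ (e.symm (u₀, 0))
    (fun dt i => e.symm (F dt i, 2 * ⟪dt • ∑ j, A i j • F dt j, F dt i⟫))
    (by
      intro dt i
      have : (e (e.symm (u₀, 0) + dt • ∑ j, A i j •
          e.symm (F dt j, 2 * ⟪dt • ∑ k, A j k • F dt k, F dt j⟫))).1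
          = u₀ + dt • ∑ j, A i j • F dt j := by
        simp [map_add, map_sum, Prod.fst_sum]
      rw [this, ← hF dt i, add_sub_cancel_left])
    (fun t => e.symm (u t, ‖u t - u₀‖ ^ 2)) ε hε
    (by
      intro t ht
      have h1 := hu t ht
      have h2 : HasDerivAt (fun t => ‖u t - u₀‖ ^ 2) (2 * ⟪u t - u₀, f t (u t)⟫) t :=
        (h1.sub_const u₀).norm_sq
      have h3 := (e.symm.toContinuousLinearMap.hasFDerivAt
        (x := (u t, ‖u t - u₀‖ ^ 2))).comp_hasDerivAt t (h1.prodMk h2)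
      simpa [Function.comp_def] using h3)
    (by simp [hu₀])
  refine ⟨(‖e.toContinuousLinearMap‖ + 1) * C, δ, by positivity, hδ, fun dt hdt => ?_⟩
  have h := H dt hdt
  set X := e.symm (u₀, (0:ℝ)) + dt • ∑ j, b j •
      e.symm (F dt j, 2 * ⟪dt • ∑ k, A j k • F dt k, F dt j⟫)
      - e.symm (u (t₀ + dt), ‖u (t₀ + dt) - u₀‖ ^ 2) with hX
  have h1 : ‖e X‖ ≤ (‖e.toContinuousLinearMap‖ + 1) * C * dt ^ (p + 1) := by
    have h2 : ‖e X‖ ≤ ‖e.toContinuousLinearMap‖ * ‖X‖ :=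
      e.toContinuousLinearMap.le_opNorm X
    have h3 := norm_nonneg e.toContinuousLinearMap
    nlinarith [norm_nonneg X]
  have e1 : (e X).1 = u₀ + dt • ∑ j, b j • F dt j - u (t₀ + dt) := by
    simp [hX, map_sum, Prod.fst_sum]
  have e2 : (e X).2 = dt ^ 2 * (2 * ∑ i, ∑ j, b i * A i j * ⟪F dt i, F dt j⟫)
      - ‖u (t₀ + dt) - u₀‖ ^ 2 := by
    simp only [hX, map_sum, Prod.snd_sum, map_add, map_sub, map_smul, Prod.snd_add, Prod.snd_sub,
      Prod.smul_snd, ContinuousLinearEquiv.apply_symm_apply, zero_add, smul_eq_mul,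
      real_inner_smul_left, sum_inner]
    congr 1
    simp only [Finset.mul_sum]
    refine Finset.sum_congr rfl fun i _ => Finset.sum_congr rfl fun j _ => ?_
    rw [real_inner_comm]
    ring
  rw [← e1, ← e2, ← Real.norm_eq_abs]
  exact ⟨(norm_fst_le _).trans h1, (norm_snd_le _).trans h1⟩

lemma rrk_mvt {E : Type*} [NormedAddCommGroup E] [NormedSpace ℝ E] (u g : ℝ → E)
    (t₀ ε : ℝ) (hε : 0 < ε)
    (hu : ∀ t ∈ Set.Ioo (t₀ - ε) (t₀ + ε), HasDerivAt u (g t) t)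
    (hg : DifferentiableAt ℝ g t₀) :
    ∃ K δ : ℝ, 0 < K ∧ 0 < δ ∧ ∀ r, 0 < r → r < δ → ∀ x y : ℝ, |x| ≤ r → |y| ≤ r →
      ‖u (t₀ + y) - u (t₀ + x) - (y - x) • g t₀‖ ≤ K * r * |y - x| := by
  obtain ⟨K, hK, h⟩ := hg.isBigO_sub.exists_pos
  rw [Asymptotics.IsBigOWith, Metric.eventually_nhds_iff] at h
  obtain ⟨δ, hδ, h⟩ := h
  refine ⟨K, min δ ε, hK, lt_min hδ hε, fun r hr hrd x y hx hy => ?_⟩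
  have hrδ := hrd.trans_le (min_le_left _ _)
  have hrε := hrd.trans_le (min_le_right _ _)
  have hmem : ∀ z : ℝ, |z| ≤ r → t₀ + z ∈ Set.Icc (t₀ - r) (t₀ + r) := by
    intro z hz
    have := abs_le.1 hz
    constructor <;> linarith
  have := (convex_Icc (t₀ - r) (t₀ + r)).norm_image_sub_le_of_norm_hasDerivWithin_le
    (f := fun t => u t - t • g t₀) (f' := fun t => g t - (1:ℝ) • g t₀) (C := K * r)
    (fun t ht => by
      have ht' : t ∈ Set.Ioo (t₀ - ε) (t₀ + ε) :=
        ⟨by linarith [ht.1], by linarith [ht.2]⟩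
      exact ((hu t ht').sub ((hasDerivAt_id t).smul_const (g t₀))).hasDerivWithinAt)
    (fun t ht => by
      have h1 : |t - t₀| ≤ r := abs_le.2 ⟨by linarith [ht.1], by linarith [ht.2]⟩
      have h2 := @h t (by rw [Real.dist_eq]; linarith)
      rw [Real.norm_eq_abs] at h2
      rw [one_smul]
      exact h2.trans (by gcongr)) (hmem x hx) (hmem y hy)
  convert this using 2
  · simp only [add_smul, sub_smul]; abel
  · rw [Real.norm_eq_abs]; congr 1; ring

lemma rrk_final {E : Type*} [NormedAddCommGroup E] [InnerProductSpace ℝ E] (q : ℕ)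
    (u : ℝ → E) (t₀ : ℝ) (g : E) (hg : g ≠ 0) (S : ℝ → E) (Q : ℝ → ℝ)
    (C δ K δ' : ℝ) (hC : 0 < C) (hδ : 0 < δ) (hK : 0 < K) (hδ' : 0 < δ')
    (h1 : ∀ h ∈ Set.Ioo (0 : ℝ) δ, ‖u t₀ + h • S h - u (t₀ + h)‖ ≤ C * h ^ (q + 3) ∧
      |h ^ 2 * Q h - ‖u (t₀ + h) - u t₀‖ ^ 2| ≤ C * h ^ (q + 3))
    (h2 : ∀ r, 0 < r → r < δ' → ∀ x y : ℝ, |x| ≤ r → |y| ≤ r →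
      ‖u (t₀ + y) - u (t₀ + x) - (y - x) • g‖ ≤ K * r * |y - x|) :
    ∃ C δ : ℝ, 0 < C ∧ 0 < δ ∧ ∀ h ∈ Set.Ioo (0 : ℝ) δ, S h ≠ 0 ∧
      ‖u t₀ + (Q h / ‖S h‖ ^ 2 * h) • S h - u (t₀ + Q h / ‖S h‖ ^ 2 * h)‖ ≤ C * h ^ (q + 3) := by
  have hG : 0 < ‖g‖ := norm_pos_iff.2 hg
  set G := ‖g‖ with hGdef
  set C2 := C + C * (2 * (G + K + C) + C) with hC2
  have hC2p : 0 < C2 := by positivity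
  set C3 := C2 / (G / 2) ^ 2 with hC3
  have hC3p : 0 < C3 := by positivity
  refine ⟨C + C3 * (K + C) + K * 2 * C3,
    min (min δ (δ' / 2)) (min 1 (min (G / 2 / (K + C)) (1 / C3))), by positivity,
    by positivity, fun h hh => ?_⟩
  obtain ⟨hh0, hh⟩ := hh
  simp only [lt_min_iff] at hh
  obtain ⟨⟨hd, hd'⟩, hone, hGs, hC3s⟩ := hh
  rw [lt_div_iff₀ (by positivity)] at hGs hC3s
  obtain ⟨a1, a2⟩ := h1 h ⟨hh0, hd⟩
  have b1 := h2 h hh0 (by linarith) 0 h (by simpa using hh0.le) (by rw [abs_of_pos hh0])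
  rw [add_zero, sub_zero, abs_of_pos hh0] at b1
  have hpow : h ^ (q + 3) ≤ h ^ 2 := pow_le_pow_of_le_one hh0.le hone.le (by omega)
  have hpow1 : h ^ (q + 1) ≤ h := by
    simpa using pow_le_pow_of_le_one hh0.le hone.le (show 1 ≤ q + 1 by omega)
  have hSg : ‖S h - g‖ ≤ (K + C) * h := by
    have : h • (S h - g) = (u t₀ + h • S h - u (t₀ + h)) + (u (t₀ + h) - u t₀ - h • g) := by
      rw [smul_sub]; abel
    have h3 : h * ‖S h - g‖ ≤ h * ((K + C) * h) := by
      have h4 := norm_add_le (u t₀ + h • S h - u (t₀ + h)) (u (t₀ + h) - u t₀ - h • g)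
      rw [← this, norm_smul, Real.norm_eq_abs, abs_of_pos hh0] at h4
      nlinarith
    exact le_of_mul_le_mul_left h3 hh0
  have hSlow : G / 2 ≤ ‖S h‖ := by
    have := norm_sub_norm_le g (S h)
    rw [norm_sub_rev] at this
    linarith
  have hSup : ‖S h‖ ≤ G + K + C := by
    have := norm_sub_norm_le (S h) g
    nlinarith
  have hS0 : S h ≠ 0 := by
    rw [← norm_pos_iff]; linarith
  refine ⟨hS0, ?_⟩
  set d := u (t₀ + h) - u t₀ with hd_def
  have hdS : ‖d - h • S h‖ ≤ C * h ^ (q + 3) := by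
    have : d - h • S h = -(u t₀ + h • S h - u (t₀ + h)) := by rw [hd_def]; abel
    rw [this, norm_neg]; exact a1
  have hp3 : 0 < h ^ (q + 3) := by positivity
  have hQ : |Q h - ‖S h‖ ^ 2| ≤ C2 * h ^ (q + 1) := by
    have k1 : |‖d‖ ^ 2 - ‖h • S h‖ ^ 2| ≤ C * h ^ (q + 3) * (2 * (G + K + C) + C) := by
      have k2 : ‖h • S h‖ ≤ G + K + C := by
        rw [norm_smul, Real.norm_eq_abs, abs_of_pos hh0]
        nlinarith [norm_nonneg (S h)]
      have k3 : |‖d‖ - ‖h • S h‖| ≤ C * h ^ (q + 3) := (abs_norm_sub_norm_le _ _).trans hdS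
      have k4 : C * h ^ (q + 3) ≤ C :=
        mul_le_of_le_one_right hC.le (pow_le_one₀ hh0.le hone.le)
      have k5 := abs_le.1 k3
      rw [sq_sub_sq, abs_mul, abs_of_nonneg (by positivity : 0 ≤ ‖d‖ + ‖h • S h‖), mul_comm]
      exact mul_le_mul k3 (by linarith) (by positivity) (by positivity)
    have k6 : |h ^ 2 * Q h - ‖h • S h‖ ^ 2| ≤ C2 * h ^ (q + 3) := by
      refine (abs_sub_le _ (‖d‖ ^ 2) _).trans ?_
      rw [hC2]; linarith
    rw [norm_smul, mul_pow, Real.norm_eq_abs, sq_abs, ← mul_sub, abs_mul,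
      abs_of_pos (by positivity : 0 < h ^ 2)] at k6
    refine le_of_mul_le_mul_left (k6.trans (le_of_eq ?_)) (by positivity : 0 < h ^ 2)
    ring
  have hγ : |Q h / ‖S h‖ ^ 2 - 1| ≤ C3 * h ^ (q + 1) := by
    have hS2 : (G / 2) ^ 2 ≤ ‖S h‖ ^ 2 := by gcongr
    have hS2p : 0 < ‖S h‖ ^ 2 := by positivity
    rw [div_sub_one hS2p.ne', abs_div, abs_of_pos hS2p, hC3, div_mul_eq_mul_div]
    exact div_le_div₀ (by positivity) hQ (by positivity) hS2
  set γ := Q h / ‖S h‖ ^ 2 with hγdef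
  have hγ1 : |γ - 1| ≤ 1 := hγ.trans (by nlinarith)
  have hγ2 := abs_le.1 hγ1
  have b2 := h2 (2 * h) (by linarith) (by linarith) h (γ * h)
    (by rw [abs_of_pos hh0]; linarith)
    (by rw [abs_mul, abs_of_pos hh0]
        exact mul_le_mul_of_nonneg_right (abs_le.2 ⟨by linarith, by linarith⟩) hh0.le)
  have key : u t₀ + (γ * h) • S h - u (t₀ + γ * h) =
      (u t₀ + h • S h - u (t₀ + h)) + ((γ - 1) * h) • (S h - g)
        - (u (t₀ + γ * h) - u (t₀ + h) - (γ * h - h) • g) := by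
    module
  rw [key]
  refine (norm_sub_le _ _).trans ?_
  have n1 := norm_add_le (u t₀ + h • S h - u (t₀ + h)) (((γ - 1) * h) • (S h - g))
  have n2 : ‖((γ - 1) * h) • (S h - g)‖ ≤ C3 * (K + C) * h ^ (q + 3) := by
    rw [norm_smul, Real.norm_eq_abs, abs_mul, abs_of_pos hh0]
    calc |γ - 1| * h * ‖S h - g‖ ≤ (C3 * h ^ (q + 1)) * h * ((K + C) * h) := by gcongr
      _ = _ := by ring
  have n3 : K * (2 * h) * |γ * h - h| ≤ K * 2 * C3 * h ^ (q + 3) := by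
    rw [show γ * h - h = (γ - 1) * h by ring, abs_mul, abs_of_pos hh0]
    calc K * (2 * h) * (|γ - 1| * h) ≤ K * (2 * h) * ((C3 * h ^ (q + 1)) * h) := by gcongr
      _ = _ := by ring
  linarith



/-- Corollary 2.6, relaxation part.  Let `(A, b)` be an explicit `s`-stage
Runge–Kutta method of order `p ≥ 2`, let `f` be `C^∞` with `f(t₀, u₀) ≠ 0` and exact
solution `u` defined on a neighborhood of `t₀`.  With `γ(dt)` the relaxation parameter
defined by the case formula, the relaxed update
`u¹_γ(dt) = u₀ + γ(dt) dt ∑ⱼ bⱼ fⱼ`, interpreted as an approximation to `u(t₀ + γ(dt) dt)`,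
has order `p`: `‖u¹_γ(dt) − u(t₀ + γ(dt) dt)‖ = O(dt^(p+1))` as `dt → 0⁺`. -/
theorem rrk_relaxation_order_cor
    {s m p : ℕ} (A : Fin s → Fin s → ℝ) (b : Fin s → ℝ)
    (hA : ∀ i j : Fin s, (i : ℕ) ≤ (j : ℕ) → A i j = 0)
    (hp : 2 ≤ p)
    (horder : RKHasOrder A b p)
    (f : ℝ → EuclideanSpace ℝ (Fin m) → EuclideanSpace ℝ (Fin m))
    (hf : ContDiff ℝ (⊤ : ℕ∞) (Function.uncurry f))
    (t₀ : ℝ) (u₀ : EuclideanSpace ℝ (Fin m))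
    (hf0 : f t₀ u₀ ≠ 0)
    (F : ℝ → Fin s → EuclideanSpace ℝ (Fin m))
    (hF : ∀ dt i, F dt i =
      f (t₀ + (∑ j, A i j) * dt) (u₀ + dt • ∑ j, A i j • F dt j))
    (u : ℝ → EuclideanSpace ℝ (Fin m)) (ε : ℝ) (hε : 0 < ε)
    (hu : ∀ t ∈ Set.Ioo (t₀ - ε) (t₀ + ε), HasDerivAt u (f t (u t)) t)
    (hu₀ : u t₀ = u₀) :
    ∃ C δ : ℝ, 0 < C ∧ 0 < δ ∧
      ∀ dt ∈ Set.Ioo (0 : ℝ) δ,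
        ‖u₀ + (RKGamma A b F dt * dt) • ∑ j, b j • F dt j - u (t₀ + RKGamma A b F dt * dt)‖
          ≤ C * dt ^ (p + 1) := by
  obtain ⟨C, δ, hC, hδ, h1⟩ := rrk_aug A b horder f hf t₀ u₀ F hF u ε hε hu hu₀
  have hut := hu t₀ ⟨by linarith, by linarith⟩
  have hg : DifferentiableAt ℝ (fun t => f t (u t)) t₀ := by
    have hd : Differentiable ℝ (Function.uncurry f) := hf.differentiable (by simp)
    exact (hd (t₀, u t₀)).comp t₀ (differentiableAt_id.prodMk hut.differentiableAt)
  obtain ⟨K, δ', hK, hδ', h2⟩ := rrk_mvt u (fun t => f t (u t)) t₀ ε hε hu hg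
  obtain ⟨q, rfl⟩ := Nat.exists_eq_add_of_le' hp
  subst hu₀
  obtain ⟨C', d, hC', hd, H⟩ := rrk_final q u t₀ (f t₀ (u t₀)) hf0
    (fun dt => ∑ j, b j • F dt j)
    (fun dt => 2 * ∑ i, ∑ j, b i * A i j * ⟪F dt i, F dt j⟫) C δ K δ' hC hδ hK hδ' h1 h2
  refine ⟨C', d, hC', hd, fun dt hdt => ?_⟩
  obtain ⟨hS, hb⟩ := H dt hdt
  rw [RKGamma, if_neg hS]
  exact hb
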